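/- There exist L > 0, a constant C > 0, and, for every integer k > L and every k-consistent rules mapping R ∈ 𝓡(k), a length n^{k,R} ∈ ℕ with n^{k,R} ≥ 1 and a vector T^{k,R} ∈ ℝ^r with n^{k,R}·T^{k,R} ∈ ℕ^r and Σ_{i∈𝒳} T^{k,R}_i = 1, such that: (1) lim_{k→∞} inf_{R∈𝓡(k)} (1/k) · log ( Σ_{ā ∈ 𝒳^{n^{k,R}}, 𝒯(ā) = T^{k,R}} P_{R,Q}(ā) ) = 0; (2) setting λ^{k,R}_j = Σ_{i∈𝒳_j} T^{k,R}_i, lim_{k→∞} sup_{R∈𝓡(k)} Σ_{j=1}^N Σ_{i∈𝒳_j} |T^{k,R}_i − λ^{k,R}_j·Q_i| = 0; (3) for every k > L and R ∈ 𝓡(k): n^{k,R}·(K·T^{k,R}) ≥ k, n^{k,R}·(B·T^{k,R}) ≤ αk, and n^{k,R} ≤ C·k. -/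

import Mathlib

/-!
Generate a word at random, choosing the next group by `R` and the next letter by `Q`, until its
coverage reaches `k`. Consistency of `R` prevents overshooting, so the coverage is then exactly `k`.
The cost constraint becomes `Z ≤ 0`, where `Z` is the walk with increments `b_a - α K_a`
(`RB.drift`). Each group of `Q` gives `Z` a nonpositive mean increment. As all costs are at least
`1`, `Z ≤ 0` also bounds the length of the word by `α k`.

The point is to bound below, by `exp (-o(k))` uniformly in `R`, the probability that `Z ≤ 0` at the
end and that letter frequencies are close to a mixture of the groups of `Q`. Under `Q` itself the
mean of `Z` may vanish, so `Q` is replaced by a slight tilt `p` for which, group by group, the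
increments of `Z` are nonpositive or have strictly negative mean (`RB.exists_tilt`). Under `p` the
function `RB.pot`, a discontinuous exponential potential in `Z` plus compensated squared deviations
of letter counts, is a supermartingale (`RB.sum_pot_le`). It is at least `1` at every failure
(`RB.one_le_pot`) and smaller than `1` by a constant at the empty word, so success has probability
bounded below (`RB.good_mass`). Returning from `p` to `Q` costs a factor `exp (-t α k)` with `t`
arbitrarily small (`RB.wordP_change`).

Success depends only on the letter counts of the word, and there are polynomially many count vectors
of length at most `α k`, so one successful type class has probability `exp (-o(k))`
(`RB.exists_heavy_type`). It has all the required properties up to an error `e > 0` once `k` is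
large (`RB.eventually_adm`). A diagonal choice of `e` tending to `0` with `k`
(`RB.exists_tendsto_of_eventually`) concludes; the logarithm in the first limit is nonpositive because words of a
fixed length have total probability at most `1` (`RB.tsum_class_le_one`).
-/

open scoped Classical

noncomputable section

namespace RB

/-- The alphabet `𝒳`, given as the disjoint union of the groups `𝒳_j`. -/
abbrev X (N : ℕ) (r : Fin N → ℕ) : Type := (j : Fin N) × Fin (r j)

variable {N : ℕ} {r : Fin N → ℕ}

/-- the coverage `κ` of a word (`K` is the concatenation of the `k̄ʲ`) -/
def kap (K : (j : Fin N) → Fin (r j) → ℕ) (l : List (X N r)) : ℕ :=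
  (l.map fun a => K a.1 a.2).sum

/-- `P_{R,Υ}(ā) = ∏_ℓ [Υ_{a_ℓ}` if `a_ℓ ∈ 𝒳_{R(a_1,…,a_{ℓ-1})}`, else `0]` -/
def wordP (R : List (X N r) → Fin N) (Υ : (j : Fin N) → Fin (r j) → ℝ)
    (l : List (X N r)) : ℝ :=
  ∏ ℓ : Fin l.length,
    if (l.get ℓ).1 = R (l.take ℓ.1) then Υ (l.get ℓ).1 (l.get ℓ).2 else 0

/-- the type `𝒯(ā)` of a word: `𝒯(ā)_a` is the frequency of the letter `a` -/
def typeOf (l : List (X N r)) (a : X N r) : ℝ := (l.count a : ℝ) / (l.length : ℝ)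

/-- `k`-consistent rules mappings -/
def Consistent (K : (j : Fin N) → Fin (r j) → ℕ) (k : ℕ)
    (R : List (X N r) → Fin N) : Prop :=
  ∀ l : List (X N r), kap K l < k → ∀ i : Fin (r (R l)), K (R l) i + kap K l ≤ k

/-- Kullback-Leibler divergence -/
def KL {ρ : ℕ} (q g : Fin ρ → ℝ) : ℝ := ∑ i, q i * Real.log (q i / g i)

/-- the set of values of the `α`-branching optimization problem -/
def BrSet (α : ℝ) {ρ : ℕ} (bv kv : Fin ρ → ℕ) (g : Fin ρ → ℝ) : Set ℝ :=
  {x | ∃ q : Fin ρ → ℝ, (∀ i, 0 ≤ q i) ∧ (∑ i, q i = 1) ∧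
        (∑ i, q i * (bv i : ℝ)) ≤ α * ∑ i, q i * (kv i : ℝ) ∧
        x = KL q g / ∑ i, q i * (kv i : ℝ)}

end RB

/-! ### Walks along a word and the potential -/

namespace RB

section Potential

variable {N : ℕ} {r : Fin N → ℕ}

/-- The letter weight `b_a - α K_a`; its sum along a word of coverage `k` is the cost minus `α k`. -/
def drift (α : ℝ) (bb kb : (j : Fin N) → Fin (r j) → ℕ) (a : X N r) : ℝ :=
  (bb a.1 a.2 : ℝ) - α * (kb a.1 a.2 : ℝ)

/-- The sum of the letter weights `s` along a word. -/
def walk (s : X N r → ℝ) (l : List (X N r)) : ℝ := (l.map s).sum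

/-- The martingale increment attached to the letter `a`: the walk with these increments is the
number of occurrences of `a` minus `p_a` times the number of letters in the group of `a`. -/
def dev (p : (j : Fin N) → Fin (r j) → ℝ) (a x : X N r) : ℝ :=
  if x.1 = a.1 then (if x = a then 1 else 0) - p a.1 a.2 else 0

/-- Potential controlling the sign of the drift walk. It is `exp (θ z)` for `z > 0` and
`(1 - ρ) exp (θ z)` for `z ≤ 0`: the jump at `0` makes it start at `1 - ρ < 1` while being at least
`1` as soon as the walk is positive, however small the positive value. -/
def esc (θ ρ z : ℝ) : ℝ := (if 0 < z then 1 else 1 - ρ) * Real.exp (θ * z)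

/-- The full potential: `esc` of the drift walk, plus the squared letter deviations compensated by
the remaining time `A - length` and normalized by `h`. -/
def pot (p : (j : Fin N) → Fin (r j) → ℝ) (s : X N r → ℝ) (θ ρ A h : ℝ)
    (l : List (X N r)) : ℝ :=
  esc θ ρ (walk s l) +
    (∑ a, walk (dev p a) l ^ 2 + (Fintype.card (X N r) : ℝ) * (A - (l.length : ℝ))) / h

@[simp] lemma walk_nil (s : X N r → ℝ) : walk s [] = 0 := rfl

@[simp] lemma walk_append (s : X N r → ℝ) (l : List (X N r)) (a : X N r) :
    walk s (l ++ [a]) = walk s l + s a := by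
  simp [walk]

lemma kap_append (K : (j : Fin N) → Fin (r j) → ℕ) (l : List (X N r)) (a : X N r) :
    kap K (l ++ [a]) = kap K l + K a.1 a.2 := by
  simp [kap]

lemma wordP_eq_range (R : List (X N r) → Fin N) (Υ : (j : Fin N) → Fin (r j) → ℝ)
    (l : List (X N r)) :
    wordP R Υ l = ∏ i ∈ Finset.range l.length,
      if h : i < l.length then
        (if (l[i]).1 = R (l.take i) then Υ (l[i]).1 (l[i]).2 else 0) else 1 := by
  rw [Finset.prod_range]
  simp [wordP]

@[simp] lemma wordP_nil (R : List (X N r) → Fin N) (Υ : (j : Fin N) → Fin (r j) → ℝ) :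
    wordP R Υ [] = 1 := by
  simp [wordP]

lemma wordP_append (R : List (X N r) → Fin N) (Υ : (j : Fin N) → Fin (r j) → ℝ)
    (l : List (X N r)) (a : X N r) :
    wordP R Υ (l ++ [a]) = wordP R Υ l * (if a.1 = R l then Υ a.1 a.2 else 0) := by
  have hlen : Finset.range (l ++ [a]).length = Finset.range (l.length + 1) := by simp
  rw [wordP_eq_range, wordP_eq_range, hlen, Finset.prod_range_succ]
  congr 1
  · refine Finset.prod_congr rfl fun i hi => ?_
    have hi' : i < l.length := Finset.mem_range.1 hi
    have h2 : i < (l ++ [a]).length := by simp; omega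
    rw [dif_pos h2, dif_pos hi']
    exact congrArg₂ (fun (x : X N r) v => if x.1 = R v then Υ x.1 x.2 else 0)
      (List.getElem_append_left hi') (List.take_append_of_le_length hi'.le)
  · have h2 : l.length < (l ++ [a]).length := by simp
    rw [dif_pos h2]
    exact congrArg₂ (fun (x : X N r) v => if x.1 = R v then Υ x.1 x.2 else 0)
      (List.getElem_concat_length rfl _) (by simp)

lemma wordP_nonneg (R : List (X N r) → Fin N) {Υ : (j : Fin N) → Fin (r j) → ℝ}
    (hΥ : ∀ j i, 0 ≤ Υ j i) (l : List (X N r)) : 0 ≤ wordP R Υ l := by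
  unfold wordP
  refine Finset.prod_nonneg fun i _ => ?_
  split_ifs
  · exact hΥ _ _
  · exact le_rfl

/-- Change of measure: a letterwise bound `c p ≤ q` costs at most a factor `c` per letter. -/
lemma wordP_change (R : List (X N r) → Fin N) {p q : (j : Fin N) → Fin (r j) → ℝ}
    (hp : ∀ j i, 0 ≤ p j i) {c : ℝ} (hc : 0 ≤ c) (hpq : ∀ j i, c * p j i ≤ q j i)
    (l : List (X N r)) : c ^ l.length * wordP R p l ≤ wordP R q l := by
  induction l using List.reverseRecOn with
  | nil => simp
  | append_singleton l a ih =>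
    rw [wordP_append, wordP_append, List.length_append, List.length_singleton, pow_succ]
    split_ifs with h
    · calc c ^ l.length * c * (wordP R p l * p a.1 a.2)
          = (c ^ l.length * wordP R p l) * (c * p a.1 a.2) := by ring
        _ ≤ wordP R q l * q a.1 a.2 := by
          refine mul_le_mul ih (hpq _ _) (mul_nonneg hc (hp _ _)) ?_
          exact le_trans (mul_nonneg (pow_nonneg hc _) (wordP_nonneg R hp l)) ih
    · simp

lemma sum_wordP_append (R : List (X N r) → Fin N) (Υ : (j : Fin N) → Fin (r j) → ℝ)
    (l : List (X N r)) (F : X N r → ℝ) :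
    ∑ a, wordP R Υ (l ++ [a]) * F a = wordP R Υ l * ∑ i, Υ (R l) i * F ⟨R l, i⟩ := by
  simp only [wordP_append]
  rw [Fintype.sum_sigma, Finset.mul_sum, Finset.sum_eq_single (R l)]
  · simp [mul_assoc]
  · intro j _ hj
    simp [hj]
  · simp

/-- Words of `S` strictly extending `l` are partitioned according to the letter following `l`. -/
lemma sum_prefix_append (S : Finset (List (X N r))) (f : List (X N r) → ℝ)
    (l : List (X N r)) :
    ∑ a, ∑ w ∈ S with (l ++ [a]) <+: w, f w = ∑ w ∈ S with (l <+: w ∧ w ≠ l), f w := by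
  simp only [Finset.sum_filter]
  rw [Finset.sum_comm]
  refine Finset.sum_congr rfl fun w _ => ?_
  by_cases hw : l <+: w
  · obtain ⟨t, rfl⟩ := hw
    cases t with
    | nil =>
      have : ∀ a, ¬ (l ++ [a]) <+: l := fun a h => by simpa using h.length_le
      simp [this]
    | cons b t => simp [List.prefix_append_right_inj]
  · have : ∀ a, ¬ (l ++ [a]) <+: w := fun a h => hw ((List.prefix_append l [a]).trans h)
    simp [hw, this]

/-- Words of one fixed length that extend `l` have total probability at most that of `l`. -/
lemma sum_prefix_le (R : List (X N r) → Fin N) {Υ : (j : Fin N) → Fin (r j) → ℝ}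
    (hΥ : ∀ j i, 0 ≤ Υ j i) (hsum : ∀ j, ∑ i, Υ j i = 1) (n : ℕ)
    (S : Finset (List (X N r))) (hS : ∀ w ∈ S, w.length = n) (m : ℕ) :
    ∀ l : List (X N r), n ≤ l.length + m →
      ∑ w ∈ S with l <+: w, wordP R Υ w ≤ wordP R Υ l := by
  induction m with
  | zero =>
    intro l hl
    calc ∑ w ∈ S with l <+: w, wordP R Υ w ≤ ∑ w ∈ {l}, wordP R Υ w := by
          refine Finset.sum_le_sum_of_subset_of_nonneg ?_ fun w _ _ => wordP_nonneg R hΥ w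
          intro w hw
          rw [Finset.mem_filter] at hw
          have := hS w hw.1
          rw [Finset.mem_singleton]
          exact (hw.2.eq_of_length_le (by omega)).symm
      _ = wordP R Υ l := by simp
  | succ m ih =>
    intro l hl
    by_cases h : n ≤ l.length + m
    · exact ih l h
    have h1 : ∑ w ∈ S with l <+: w, wordP R Υ w
        = ∑ w ∈ S with (l <+: w ∧ w ≠ l), wordP R Υ w := by
      refine Finset.sum_congr ?_ fun _ _ => rfl
      refine Finset.filter_congr fun w hw => ?_
      have := hS w hw
      constructor
      · refine fun h' => ⟨h', ?_⟩
        rintro rfl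
        omega
      · exact fun h' => h'.1
    rw [h1, ← sum_prefix_append]
    calc ∑ a, ∑ w ∈ S with (l ++ [a]) <+: w, wordP R Υ w
        ≤ ∑ a, wordP R Υ (l ++ [a]) * 1 := by
          refine Finset.sum_le_sum fun a _ => ?_
          rw [mul_one]
          exact ih _ (by simp; omega)
      _ = wordP R Υ l := by
          rw [sum_wordP_append]; simp [hsum]

lemma esc_le_exp {θ ρ : ℝ} (hρ : 0 ≤ ρ) (z : ℝ) : esc θ ρ z ≤ Real.exp (θ * z) := by
  unfold esc
  have := Real.exp_pos (θ * z)
  split_ifs <;> nlinarith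

lemma le_esc {θ ρ : ℝ} (hρ : 0 ≤ ρ) (z : ℝ) : (1 - ρ) * Real.exp (θ * z) ≤ esc θ ρ z := by
  unfold esc
  have := Real.exp_pos (θ * z)
  split_ifs <;> nlinarith

lemma esc_nonneg {θ ρ : ℝ} (hρ1 : ρ ≤ 1) (z : ℝ) : 0 ≤ esc θ ρ z := by
  unfold esc
  have := Real.exp_pos (θ * z)
  split_ifs <;> nlinarith

lemma one_le_esc {θ ρ z : ℝ} (hθ : 0 ≤ θ) (hz : 0 < z) : 1 ≤ esc θ ρ z := by
  simp only [esc, hz, if_true, one_mul]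
  exact Real.one_le_exp (by positivity)

lemma esc_mono {θ ρ : ℝ} (hθ : 0 ≤ θ) (hρ : 0 ≤ ρ) (hρ1 : ρ ≤ 1) {y z : ℝ} (h : y ≤ z) :
    esc θ ρ y ≤ esc θ ρ z := by
  have he : Real.exp (θ * y) ≤ Real.exp (θ * z) :=
    Real.exp_le_exp.2 (mul_le_mul_of_nonneg_left h hθ)
  have h0 := Real.exp_pos (θ * y)
  by_cases hz : 0 < z
  · refine (esc_le_exp hρ y).trans ?_
    simpa [esc, hz] using he
  · have hy : ¬ 0 < y := fun h' => hz (h'.trans_le h)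
    simp only [esc, hz, hy, if_false]
    exact mul_le_mul_of_nonneg_left he (by linarith)

/-- `esc` of the drift walk is a supermartingale: either every letter of positive probability moves
the walk down, and monotonicity suffices, or the exponential moment is at most `1 - ρ`, which
absorbs the jump of `esc` at `0`. -/
lemma sum_esc_le {ι : Type*} [Fintype ι] {p s : ι → ℝ} (hp : ∀ i, 0 ≤ p i)
    (hsum : ∑ i, p i = 1) {θ ρ : ℝ} (hθ : 0 ≤ θ) (hρ : 0 ≤ ρ) (hρ1 : ρ ≤ 1)
    (h : (∀ i, p i ≠ 0 → s i ≤ 0) ∨ ∑ i, p i * Real.exp (θ * s i) ≤ 1 - ρ) (z : ℝ) :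
    ∑ i, p i * esc θ ρ (z + s i) ≤ esc θ ρ z := by
  rcases h with h | h
  · calc ∑ i, p i * esc θ ρ (z + s i) ≤ ∑ i, p i * esc θ ρ z := by
          refine Finset.sum_le_sum fun i _ => ?_
          by_cases hi : p i = 0
          · simp [hi]
          · exact mul_le_mul_of_nonneg_left
              (esc_mono hθ hρ hρ1 (by linarith [h i hi])) (hp i)
      _ = esc θ ρ z := by rw [← Finset.sum_mul, hsum, one_mul]
  · calc ∑ i, p i * esc θ ρ (z + s i)
        ≤ ∑ i, Real.exp (θ * z) * (p i * Real.exp (θ * s i)) := by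
          refine Finset.sum_le_sum fun i _ => ?_
          calc p i * esc θ ρ (z + s i) ≤ p i * Real.exp (θ * (z + s i)) :=
                mul_le_mul_of_nonneg_left (esc_le_exp hρ _) (hp i)
            _ = _ := by rw [mul_add, Real.exp_add]; ring
      _ = Real.exp (θ * z) * ∑ i, p i * Real.exp (θ * s i) := by rw [Finset.mul_sum]
      _ ≤ Real.exp (θ * z) * (1 - ρ) := mul_le_mul_of_nonneg_left h (Real.exp_pos _).le
      _ ≤ esc θ ρ z := by rw [mul_comm]; exact le_esc hρ z

/-- The squared deviation of a letter grows by at most `1` per step in mean. -/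
lemma sum_dev_sq_le {p : (j : Fin N) → Fin (r j) → ℝ} (hp : ∀ j i, 0 ≤ p j i)
    (hsum : ∀ j, ∑ i, p j i = 1) (a : X N r) (j : Fin N) (D : ℝ) :
    ∑ i, p j i * (D + dev p a ⟨j, i⟩) ^ 2 ≤ D ^ 2 + 1 := by
  by_cases hj : j = a.1
  · subst hj
    have hpa : p a.1 a.2 ≤ 1 := by
      rw [← hsum a.1]
      exact Finset.single_le_sum (fun i _ => hp a.1 i) (Finset.mem_univ _)
    have hd : ∀ i, dev p a ⟨a.1, i⟩ = (if i = a.2 then 1 else 0) - p a.1 a.2 := by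
      intro i
      have : ((⟨a.1, i⟩ : X N r) = a) ↔ i = a.2 := by
        obtain ⟨j, i'⟩ := a
        simp
      simp [dev, this]
    have h0 := hp a.1 a.2
    have h1 : ∀ i, p a.1 i * (D + dev p a ⟨a.1, i⟩) ^ 2
        = p a.1 i * (D - p a.1 a.2) ^ 2
          + (if i = a.2 then p a.1 i * (2 * (D - p a.1 a.2) + 1) else 0) := by
      intro i
      rw [hd]
      split_ifs <;> ring
    simp only [h1, Finset.sum_add_distrib, ← Finset.sum_mul, hsum]
    rw [Finset.sum_ite_eq' Finset.univ a.2]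
    simp only [Finset.mem_univ, if_true]
    nlinarith
  · have hd : ∀ i, dev p a ⟨j, i⟩ = 0 := fun i => by simp [dev, hj]
    simp only [hd, add_zero, ← Finset.sum_mul, hsum]
    linarith

/-- `pot` is a supermartingale whatever group `j` is chosen next. -/
lemma sum_pot_le {p : (j : Fin N) → Fin (r j) → ℝ} (hp : ∀ j i, 0 ≤ p j i)
    (hsum : ∀ j, ∑ i, p j i = 1) {s : X N r → ℝ} {θ ρ : ℝ}
    (hθ : 0 ≤ θ) (hρ : 0 ≤ ρ) (hρ1 : ρ ≤ 1)
    (h : ∀ j, (∀ i, p j i ≠ 0 → s ⟨j, i⟩ ≤ 0) ∨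
      ∑ i, p j i * Real.exp (θ * s ⟨j, i⟩) ≤ 1 - ρ) (A : ℝ) {H : ℝ} (hH : 0 < H)
    (l : List (X N r)) (j : Fin N) :
    ∑ i, p j i * pot p s θ ρ A H (l ++ [⟨j, i⟩]) ≤ pot p s θ ρ A H l := by
  have h1 := sum_esc_le (hp j) (hsum j) hθ hρ hρ1 (h j) (walk s l)
  have h2 : ∑ i, p j i * ∑ a, walk (dev p a) (l ++ [⟨j, i⟩]) ^ 2
      ≤ ∑ a, walk (dev p a) l ^ 2 + (Fintype.card (X N r) : ℝ) := by
    simp only [Finset.mul_sum, walk_append]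
    rw [Finset.sum_comm]
    calc _ ≤ ∑ a : X N r, (walk (dev p a) l ^ 2 + 1) :=
          Finset.sum_le_sum fun a _ => sum_dev_sq_le hp hsum a j _
      _ = _ := by simp [Finset.sum_add_distrib]
  have h3 : ∑ i, p j i * pot p s θ ρ A H (l ++ [⟨j, i⟩])
      = ∑ i, p j i * esc θ ρ (walk s l + s ⟨j, i⟩)
        + (∑ i, p j i * ∑ a, walk (dev p a) (l ++ [⟨j, i⟩]) ^ 2
          + (Fintype.card (X N r) : ℝ) * (A - (l.length : ℝ) - 1)) / H := by
    have h4 : (Fintype.card (X N r) : ℝ) * (A - (l.length : ℝ) - 1)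
        = ∑ i, p j i * ((Fintype.card (X N r) : ℝ) * (A - (l.length : ℝ) - 1)) := by
      rw [← Finset.sum_mul, hsum, one_mul]
    rw [h4, ← Finset.sum_add_distrib, Finset.sum_div, ← Finset.sum_add_distrib]
    refine Finset.sum_congr rfl fun i _ => ?_
    simp only [pot, walk_append, List.length_append, List.length_singleton]
    push_cast
    ring
  rw [h3]
  unfold pot
  refine add_le_add h1 (div_le_div_of_nonneg_right ?_ hH.le)
  linarith

/-- Since all costs are at least `1`, the length of a word is at most its cost. -/
lemma length_le_walk {α : ℝ} {bb kb : (j : Fin N) → Fin (r j) → ℕ}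
    (hbb : ∀ j i, 1 ≤ bb j i) (l : List (X N r)) :
    (l.length : ℝ) ≤ walk (drift α bb kb) l + α * (kap kb l : ℝ) := by
  induction l using List.reverseRecOn with
  | nil => simp [kap]
  | append_singleton l a ih =>
    have : (1 : ℝ) ≤ bb a.1 a.2 := by exact_mod_cast hbb a.1 a.2
    rw [walk_append, kap_append, List.length_append, drift]
    push_cast
    simp only [List.length_singleton, Nat.cast_one]
    linarith

/-- Words of coverage exactly `k` and cost at most `α k` in which each letter count deviates by at
most `η k` from `p` times the count of its group. -/
def Good (p : (j : Fin N) → Fin (r j) → ℝ) (α : ℝ) (bb kb : (j : Fin N) → Fin (r j) → ℕ)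
    (k : ℕ) (η : ℝ) : Set (List (X N r)) :=
  {w | kap kb w = k ∧ walk (drift α bb kb) w ≤ 0 ∧ ∀ a, |walk (dev p a) w| ≤ η * k}

lemma good_length {p : (j : Fin N) → Fin (r j) → ℝ} {α : ℝ}
    {bb kb : (j : Fin N) → Fin (r j) → ℕ} (hbb : ∀ j i, 1 ≤ bb j i)
    {k : ℕ} {η : ℝ} {w : List (X N r)} (hw : w ∈ Good p α bb kb k η) :
    (w.length : ℝ) ≤ α * k := by
  have := length_le_walk (α := α) (kb := kb) hbb w
  rw [hw.1] at this
  linarith [hw.2.1]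

lemma good_finite (p : (j : Fin N) → Fin (r j) → ℝ) (α : ℝ)
    {bb : (j : Fin N) → Fin (r j) → ℕ} (kb : (j : Fin N) → Fin (r j) → ℕ)
    (hbb : ∀ j i, 1 ≤ bb j i) (k : ℕ) (η : ℝ) : (Good p α bb kb k η).Finite := by
  refine (List.finite_length_le (X N r) ⌊α * k⌋₊).subset fun w hw => ?_
  exact Nat.le_floor (good_length hbb hw)

/-- At a word that is too long, or that reaches coverage `k` without being good, the potential is at
least `1`. -/
lemma one_le_pot {p : (j : Fin N) → Fin (r j) → ℝ} {α : ℝ}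
    {bb kb : (j : Fin N) → Fin (r j) → ℕ} (hbb : ∀ j i, 1 ≤ bb j i) (hα : 0 < α)
    {θ ρ : ℝ} (hθ : 0 ≤ θ) (hρ1 : ρ ≤ 1) {k : ℕ} {η : ℝ} (hη : 0 < η) (hk : 1 ≤ k)
    {l : List (X N r)} (hkap : kap kb l ≤ k) (hlen : (l.length : ℝ) ≤ α * k + 1)
    (h : α * k < l.length ∨ (kap kb l = k ∧ l ∉ Good p α bb kb k η)) :
    1 ≤ pot p (drift α bb kb) θ ρ (α * k + 1) ((η * k) ^ 2) l := by
  have hkpos : (0 : ℝ) < k := by exact_mod_cast hk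
  have hH : 0 < (η * (k : ℝ)) ^ 2 := by positivity
  have hc : (0 : ℝ) ≤ (Fintype.card (X N r) : ℝ) * (α * k + 1 - (l.length : ℝ)) :=
    mul_nonneg (by positivity) (by linarith)
  have hsq : (0 : ℝ) ≤ ∑ a, walk (dev p a) l ^ 2 :=
    Finset.sum_nonneg fun _ _ => sq_nonneg _
  have hrest : 0 ≤ (∑ a, walk (dev p a) l ^ 2 + (Fintype.card (X N r) : ℝ) *
      (α * k + 1 - (l.length : ℝ))) / (η * (k : ℝ)) ^ 2 := by positivity
  have key : 0 < walk (drift α bb kb) l → 1 ≤ pot p (drift α bb kb) θ ρ (α * k + 1)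
      ((η * k) ^ 2) l := by
    intro hz
    have := one_le_esc (ρ := ρ) hθ hz
    unfold pot
    linarith
  rcases h with h | ⟨h1, h2⟩
  · apply key
    have := length_le_walk (α := α) (kb := kb) hbb l
    have h3 : α * (kap kb l : ℝ) ≤ α * k :=
      mul_le_mul_of_nonneg_left (by exact_mod_cast hkap) hα.le
    linarith
  · by_cases hz : 0 < walk (drift α bb kb) l
    · exact key hz
    have : ∃ a, η * k < |walk (dev p a) l| := by
      by_contra hcon
      push Not at hcon
      exact h2 ⟨h1, not_lt.1 hz, hcon⟩
    obtain ⟨a, ha⟩ := this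
    have h4 : (η * (k : ℝ)) ^ 2 ≤ ∑ a, walk (dev p a) l ^ 2 := by
      calc (η * (k : ℝ)) ^ 2 ≤ walk (dev p a) l ^ 2 := by
            rw [← sq_abs (walk (dev p a) l)]
            exact pow_le_pow_left₀ (by positivity) ha.le 2
        _ ≤ _ := Finset.single_le_sum (f := fun a => walk (dev p a) l ^ 2)
            (fun _ _ => sq_nonneg _) (Finset.mem_univ a)
    have h5 : 1 ≤ (∑ a, walk (dev p a) l ^ 2 + (Fintype.card (X N r) : ℝ) *
      (α * k + 1 - (l.length : ℝ))) / (η * (k : ℝ)) ^ 2 := by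
      rw [le_div_iff₀ hH]
      linarith
    have := esc_nonneg (θ := θ) hρ1 (walk (drift α bb kb) l)
    unfold pot
    linarith

/-- Good words extending `l` carry at least the fraction `1 - pot l` of the probability of `l`.
Consistency of `R` enters here: from coverage below `k`, one more letter never overshoots `k`. -/
lemma good_prefix_mass {p : (j : Fin N) → Fin (r j) → ℝ} (hp : ∀ j i, 0 ≤ p j i)
    (hsum : ∀ j, ∑ i, p j i = 1) {α : ℝ} (hα : 0 < α)
    {bb kb : (j : Fin N) → Fin (r j) → ℕ} (hbb : ∀ j i, 1 ≤ bb j i)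
    {θ ρ : ℝ} (hθ : 0 ≤ θ) (hρ : 0 ≤ ρ) (hρ1 : ρ ≤ 1)
    (h : ∀ j, (∀ i, p j i ≠ 0 → drift α bb kb ⟨j, i⟩ ≤ 0) ∨
      ∑ i, p j i * Real.exp (θ * drift α bb kb ⟨j, i⟩) ≤ 1 - ρ)
    {k : ℕ} (hk : 1 ≤ k) {η : ℝ} (hη : 0 < η)
    {R : List (X N r) → Fin N} (hR : Consistent kb k R) (m : ℕ) :
    ∀ l : List (X N r), ⌊α * k⌋₊ + 1 ≤ l.length + m → l.length ≤ ⌊α * k⌋₊ + 1 →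
      kap kb l ≤ k →
      wordP R p l * (1 - pot p (drift α bb kb) θ ρ (α * k + 1) ((η * k) ^ 2) l) ≤
        ∑ w ∈ (good_finite p α kb hbb k η).toFinset with l <+: w, wordP R p w := by
  have hkpos : (0 : ℝ) < k := by exact_mod_cast hk
  have hαk : (0 : ℝ) ≤ α * k := by positivity
  have hH : 0 < (η * (k : ℝ)) ^ 2 := by positivity
  have hnn : ∀ l : List (X N r), (0 : ℝ) ≤
      ∑ w ∈ (good_finite p α kb hbb k η).toFinset with l <+: w, wordP R p w :=
    fun l => Finset.sum_nonneg fun w _ => wordP_nonneg R hp w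
  have hbad : ∀ l : List (X N r), l.length ≤ ⌊α * k⌋₊ + 1 → kap kb l ≤ k →
      (α * k < l.length ∨ (kap kb l = k ∧ l ∉ Good p α bb kb k η)) →
      wordP R p l * (1 - pot p (drift α bb kb) θ ρ (α * k + 1) ((η * k) ^ 2) l) ≤
        ∑ w ∈ (good_finite p α kb hbb k η).toFinset with l <+: w, wordP R p w := by
    intro l hl hkap hb
    have hlen : (l.length : ℝ) ≤ α * k + 1 := by
      have h1 : (l.length : ℝ) ≤ (⌊α * k⌋₊ : ℝ) + 1 := by exact_mod_cast hl
      linarith [Nat.floor_le hαk]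
    have := one_le_pot (p := p) (ρ := ρ) hbb hα hθ hρ1 hη hk hkap hlen hb
    refine le_trans ?_ (hnn l)
    exact mul_nonpos_of_nonneg_of_nonpos (wordP_nonneg R hp l) (by linarith)
  induction m with
  | zero =>
    intro l hl1 hl2 hkap
    exact hbad l hl2 hkap (Or.inl ((Nat.floor_lt hαk).1 (by omega)))
  | succ m ih =>
    intro l hl1 hl2 hkap
    by_cases hlt : ⌊α * k⌋₊ < l.length
    · exact hbad l hl2 hkap (Or.inl ((Nat.floor_lt hαk).1 hlt))
    by_cases hke : kap kb l = k
    · by_cases hg : l ∈ Good p α bb kb k η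
      · have hpot : 0 ≤ pot p (drift α bb kb) θ ρ (α * k + 1) ((η * k) ^ 2) l := by
          have hl3 := good_length hbb hg
          have hc : (0 : ℝ) ≤ (Fintype.card (X N r) : ℝ) * (α * k + 1 - (l.length : ℝ)) :=
            mul_nonneg (by positivity) (by linarith)
          have := esc_nonneg (θ := θ) hρ1 (walk (drift α bb kb) l)
          unfold pot
          positivity
        calc _ ≤ wordP R p l := mul_le_of_le_one_right (wordP_nonneg R hp l) (by linarith)
          _ ≤ _ := Finset.single_le_sum (f := fun w => wordP R p w)
              (fun w _ => wordP_nonneg R hp w) (by simp [hg])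
      · exact hbad l hl2 hkap (Or.inr ⟨hke, hg⟩)
    have hklt : kap kb l < k := lt_of_le_of_ne hkap hke
    have hexpand : ∀ F : List (X N r) → ℝ,
        wordP R p l * ∑ i, p (R l) i * F (l ++ [⟨R l, i⟩])
          = ∑ a, wordP R p (l ++ [a]) * F (l ++ [a]) :=
      fun F => (sum_wordP_append R p l fun a => F (l ++ [a])).symm
    have hstep := sum_pot_le hp hsum hθ hρ hρ1 h (α * k + 1) hH l (R l)
    calc wordP R p l * (1 - pot p (drift α bb kb) θ ρ (α * k + 1) ((η * k) ^ 2) l)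
        ≤ wordP R p l * ∑ i, p (R l) i *
          (1 - pot p (drift α bb kb) θ ρ (α * k + 1) ((η * k) ^ 2) (l ++ [⟨R l, i⟩])) := by
          refine mul_le_mul_of_nonneg_left ?_ (wordP_nonneg R hp l)
          simp only [mul_sub, mul_one, Finset.sum_sub_distrib, hsum]
          linarith
      _ = ∑ a, wordP R p (l ++ [a]) *
          (1 - pot p (drift α bb kb) θ ρ (α * k + 1) ((η * k) ^ 2) (l ++ [a])) := by
          rw [hexpand fun l => 1 - pot p (drift α bb kb) θ ρ (α * k + 1) ((η * k) ^ 2) l]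
      _ ≤ ∑ a, ∑ w ∈ (good_finite p α kb hbb k η).toFinset with (l ++ [a]) <+: w,
          wordP R p w := by
          refine Finset.sum_le_sum fun a _ => ?_
          by_cases ha : a.1 = R l
          · refine ih _ (by simp; omega) (by simp; omega) ?_
            obtain ⟨j, i⟩ := a
            dsimp only at ha
            subst ha
            rw [kap_append]
            have := hR l hklt i
            dsimp only
            omega
          · rw [wordP_append, if_neg ha, mul_zero, zero_mul]
            exact hnn _
      _ = ∑ w ∈ (good_finite p α kb hbb k η).toFinset with (l <+: w ∧ w ≠ l),
          wordP R p w := sum_prefix_append _ _ l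
      _ ≤ _ := by
          refine Finset.sum_le_sum_of_subset_of_nonneg ?_ fun w _ _ => wordP_nonneg R hp w
          intro w hw
          rw [Finset.mem_filter] at hw ⊢
          exact ⟨hw.1, hw.2.1⟩

/-- The previous bound at the empty word, where `pot` equals `1 - ρ` up to a term of order `1 / k`. -/
lemma good_mass {p : (j : Fin N) → Fin (r j) → ℝ} (hp : ∀ j i, 0 ≤ p j i)
    (hsum : ∀ j, ∑ i, p j i = 1) {α : ℝ} (hα : 0 < α)
    {bb kb : (j : Fin N) → Fin (r j) → ℕ} (hbb : ∀ j i, 1 ≤ bb j i)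
    {θ ρ : ℝ} (hθ : 0 ≤ θ) (hρ : 0 ≤ ρ) (hρ1 : ρ ≤ 1)
    (h : ∀ j, (∀ i, p j i ≠ 0 → drift α bb kb ⟨j, i⟩ ≤ 0) ∨
      ∑ i, p j i * Real.exp (θ * drift α bb kb ⟨j, i⟩) ≤ 1 - ρ)
    {k : ℕ} (hk : 1 ≤ k) {η : ℝ} (hη : 0 < η)
    {R : List (X N r) → Fin N} (hR : Consistent kb k R) :
    ρ - (Fintype.card (X N r) : ℝ) * (α * k + 1) / (η * k) ^ 2 ≤
      ∑ w ∈ (good_finite p α kb hbb k η).toFinset, wordP R p w := by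
  have := good_prefix_mass hp hsum hα hbb hθ hρ hρ1 h hk hη hR (⌊α * k⌋₊ + 1) []
    (by simp) (by simp) (by simp [kap])
  simpa [pot, esc, sub_add_eq_sub_sub] using this

end Potential

end RB

namespace RB

/-! ### Tilting the letter distributions -/

section Tilt

/-- A distribution with nonpositive mean drift has arbitrarily small relative perturbations for which
the drift is negative in mean, unless it is nonpositive on the whole support. -/
lemma exists_tilt {ι : Type*} [Fintype ι] {q s : ι → ℝ} (hq : ∀ i, 0 ≤ q i)
    (hsum : ∑ i, q i = 1) (hs : ∑ i, q i * s i ≤ 0) {t : ℝ} (ht : 0 < t) :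
    ∃ p : ι → ℝ, (∀ i, 0 ≤ p i) ∧ ∑ i, p i = 1 ∧ (∀ i, |p i - q i| ≤ t * q i) ∧
      ((∀ i, p i ≠ 0 → s i ≤ 0) ∨ ∑ i, p i * s i < 0) := by
  set m := ∑ i, q i * s i with hm
  set S := 1 + ∑ i, |s i - m| with hS
  have hS1 : 1 ≤ S := by
    have : 0 ≤ ∑ i, |s i - m| := Finset.sum_nonneg fun _ _ => abs_nonneg _
    linarith
  have hSi : ∀ i, |s i - m| ≤ S := by
    intro i
    have : |s i - m| ≤ ∑ i, |s i - m| :=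
      Finset.single_le_sum (f := fun i => |s i - m|) (fun _ _ => abs_nonneg _)
        (Finset.mem_univ i)
    linarith
  set ε := min t 1 / S with hε
  have hεpos : 0 < ε := div_pos (lt_min ht one_pos) (by linarith)
  have hεS : ∀ i, |ε * (s i - m)| ≤ min t 1 := by
    intro i
    rw [abs_mul, abs_of_pos hεpos]
    calc ε * |s i - m| ≤ ε * S := mul_le_mul_of_nonneg_left (hSi i) hεpos.le
      _ = min t 1 := by rw [hε]; field_simp
  -- This first-order exponential tilt lowers the mean of `s` by `ε` times its variance; zero
  -- variance means that `s` is constant, equal to `m ≤ 0`, on the support.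
  refine ⟨fun i => q i * (1 - ε * (s i - m)), fun i => ?_, ?_, fun i => ?_, ?_⟩
  · have := (abs_le.1 ((hεS i).trans (min_le_right t 1))).2
    exact mul_nonneg (hq i) (by linarith)
  · have : ∀ i, q i * (1 - ε * (s i - m)) = q i - ε * (q i * s i) + ε * m * q i := by
      intro i; ring
    simp only [this, Finset.sum_add_distrib, Finset.sum_sub_distrib, ← Finset.mul_sum, hsum,
      ← hm]
    ring
  · have h1 : q i * (1 - ε * (s i - m)) - q i = q i * -(ε * (s i - m)) := by ring
    rw [h1, abs_mul, abs_neg, abs_of_nonneg (hq i), mul_comm]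
    exact mul_le_mul_of_nonneg_right ((hεS i).trans (min_le_left t 1)) (hq i)
  · have hvar : ∑ i, q i * (1 - ε * (s i - m)) * s i
        = m - ε * ∑ i, q i * (s i - m) ^ 2 := by
      have h1 : ∀ i, q i * (1 - ε * (s i - m)) * s i
          = q i * s i - ε * (q i * (s i - m) ^ 2) - ε * m * (q i * s i)
            + ε * m ^ 2 * q i := by
        intro i; ring
      simp only [h1, Finset.sum_add_distrib, Finset.sum_sub_distrib, ← Finset.mul_sum, hsum,
        ← hm]
      ring
    have hnn : ∀ i ∈ Finset.univ, 0 ≤ q i * (s i - m) ^ 2 :=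
      fun i _ => mul_nonneg (hq i) (sq_nonneg _)
    rcases (Finset.sum_nonneg hnn).eq_or_lt with h0 | h0
    · left
      intro i hi
      have h1 := (Finset.sum_eq_zero_iff_of_nonneg hnn).1 h0.symm i (Finset.mem_univ i)
      have hqi : q i ≠ 0 := fun h => hi (by simp [h])
      have h2 : s i - m = 0 := by simpa [hqi] using h1
      linarith
    · right
      rw [hvar]
      have := mul_pos hεpos h0
      linarith

/-- The moment generating function has value `1` and negative derivative at `0`. -/
lemma eventually_sum_exp_lt {ι : Type*} [Fintype ι] {p s : ι → ℝ} (hsum : ∑ i, p i = 1)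
    (hs : ∑ i, p i * s i < 0) :
    ∀ᶠ θ in nhdsWithin (0 : ℝ) (Set.Ioi 0), ∑ i, p i * Real.exp (θ * s i) < 1 := by
  have hd : HasDerivAt (fun θ : ℝ => ∑ i, p i * Real.exp (θ * s i)) (∑ i, p i * s i) 0 := by
    refine HasDerivAt.fun_sum fun i _ => ?_
    have h1 : HasDerivAt (fun θ : ℝ => θ * s i) (s i) 0 := by
      simpa using (hasDerivAt_id (0 : ℝ)).mul_const (s i)
    simpa using (h1.exp.const_mul (p i))
  have h2 := (hasDerivAt_iff_tendsto_slope.1 hd).eventually_lt_const hs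
  have h3 : nhdsWithin (0 : ℝ) (Set.Ioi 0) ≤ nhdsWithin 0 {0}ᶜ :=
    nhdsWithin_mono _ fun x hx => ne_of_gt hx
  filter_upwards [h3 h2, self_mem_nhdsWithin] with θ hθ hpos
  have hpos' : (0 : ℝ) < θ := hpos
  rw [slope_def_field, sub_zero, div_lt_iff₀ hpos', zero_mul] at hθ
  simp only [zero_mul, Real.exp_zero, mul_one, hsum] at hθ
  linarith

/-- Tilts of all groups at once, with common constants `θ` and `ρ` as required by `sum_esc_le`. -/
lemma exists_tilts {N : ℕ} {r : Fin N → ℕ} {q : (j : Fin N) → Fin (r j) → ℝ}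
    {s : X N r → ℝ} (hq : ∀ j i, 0 ≤ q j i) (hsum : ∀ j, ∑ i, q j i = 1)
    (hs : ∀ j, ∑ i, q j i * s ⟨j, i⟩ ≤ 0) {t : ℝ} (ht : 0 < t) :
    ∃ p : (j : Fin N) → Fin (r j) → ℝ, (∀ j i, 0 ≤ p j i) ∧ (∀ j, ∑ i, p j i = 1) ∧
      (∀ j i, |p j i - q j i| ≤ t * q j i) ∧ ∃ θ ρ : ℝ, 0 ≤ θ ∧ 0 < ρ ∧ ρ ≤ 1 ∧
      ∀ j, (∀ i, p j i ≠ 0 → s ⟨j, i⟩ ≤ 0) ∨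
        ∑ i, p j i * Real.exp (θ * s ⟨j, i⟩) ≤ 1 - ρ := by
  choose p hp0 hp1 hpq hps using fun j => exists_tilt (hq j) (hsum j) (hs j) ht
  refine ⟨p, hp0, hp1, hpq, ?_⟩
  have h1 : ∀ᶠ θ in nhdsWithin (0 : ℝ) (Set.Ioi 0), ∀ j, (∀ i, p j i ≠ 0 → s ⟨j, i⟩ ≤ 0) ∨
      ∑ i, p j i * Real.exp (θ * s ⟨j, i⟩) < 1 := by
    rw [Filter.eventually_all]
    intro j
    rcases hps j with h | h
    · exact Filter.Eventually.of_forall fun _ => Or.inl h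
    · exact (eventually_sum_exp_lt (hp1 j) h).mono fun _ => Or.inr
  obtain ⟨θ, hθ, hθpos⟩ := (h1.and self_mem_nhdsWithin).exists
  have h2 : ∀ᶠ ρ in nhdsWithin (0 : ℝ) (Set.Ioi 0), ∀ j, (∀ i, p j i ≠ 0 → s ⟨j, i⟩ ≤ 0) ∨
      ∑ i, p j i * Real.exp (θ * s ⟨j, i⟩) ≤ 1 - ρ := by
    rw [Filter.eventually_all]
    intro j
    rcases hθ j with h | h
    · exact Filter.Eventually.of_forall fun _ => Or.inl h
    · filter_upwards [Ioo_mem_nhdsGT (sub_pos.2 h)] with ρ hρ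
      right
      linarith [hρ.2]
  obtain ⟨ρ, hρ, hρ'⟩ := (h2.and (Ioc_mem_nhdsGT (one_pos (α := ℝ)))).exists
  exact ⟨θ, ρ, le_of_lt hθpos, hρ'.1, hρ'.2, hρ⟩

end Tilt

/-! ### Type classes -/

section Types

variable {N : ℕ} {r : Fin N → ℕ}

lemma walk_eq_sum_count (s : X N r → ℝ) (l : List (X N r)) :
    walk s l = ∑ a, s a * (l.count a : ℝ) := by
  induction l using List.reverseRecOn with
  | nil => simp
  | append_singleton l b ih =>
    simp [walk_append, ih, List.count_append, List.count_singleton, mul_add,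
      Finset.sum_add_distrib]

lemma walk_dev (p : (j : Fin N) → Fin (r j) → ℝ) (a : X N r) (l : List (X N r)) :
    walk (dev p a) l
      = (l.count a : ℝ) - p a.1 a.2 * ∑ i, (l.count (⟨a.1, i⟩ : X N r) : ℝ) := by
  have h : ∀ x : X N r, dev p a x * (l.count x : ℝ)
      = (if x = a then (l.count x : ℝ) else 0)
        - (if x.1 = a.1 then p a.1 a.2 * (l.count x : ℝ) else 0) := by
    intro x
    unfold dev
    by_cases hx : x = a
    · subst hx; simp; ring
    · by_cases h1 : x.1 = a.1 <;> simp [hx, h1]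
  rw [walk_eq_sum_count]
  simp only [h, Finset.sum_sub_distrib]
  rw [Finset.sum_ite_eq' Finset.univ a, Fintype.sum_sigma (f := fun x : X N r =>
    if x.1 = a.1 then p a.1 a.2 * (l.count x : ℝ) else 0), Finset.sum_eq_single a.1]
  · simp [Finset.mul_sum]
  · intro j _ hj
    simp [hj]
  · simp

lemma sum_count (l : List (X N r)) : ∑ a, (l.count a : ℝ) = l.length := by
  have := walk_eq_sum_count (fun _ => 1) l
  simp only [one_mul] at this
  rw [← this]
  simp [walk]

lemma kap_eq_sum_count (K : (j : Fin N) → Fin (r j) → ℕ) (l : List (X N r)) :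
    (kap K l : ℝ) = ∑ a : X N r, (K a.1 a.2 : ℝ) * (l.count a : ℝ) := by
  rw [← walk_eq_sum_count (fun a => (K a.1 a.2 : ℝ))]
  simp [walk, kap, Function.comp_def]

lemma class_finite (n : ℕ) (T : X N r → ℝ) :
    {l : List (X N r) | l.length = n ∧ ∀ a, typeOf l a = T a}.Finite :=
  (List.finite_length_eq (X N r) n).subset fun _ h => h.1

lemma tsum_class (n : ℕ) (T : X N r → ℝ) (f : List (X N r) → ℝ) :
    ∑' l : {l : List (X N r) | l.length = n ∧ ∀ a, typeOf l a = T a}, f l.1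
      = ∑ l ∈ (class_finite n T).toFinset, f l := by
  have := Finset.tsum_subtype' (class_finite n T).toFinset f
  rw [Set.Finite.coe_toFinset] at this
  exact this

lemma tsum_class_le_one (R : List (X N r) → Fin N) {Υ : (j : Fin N) → Fin (r j) → ℝ}
    (hΥ : ∀ j i, 0 ≤ Υ j i) (hsum : ∀ j, ∑ i, Υ j i = 1) (n : ℕ) (T : X N r → ℝ) :
    ∑' l : {l : List (X N r) | l.length = n ∧ ∀ a, typeOf l a = T a}, wordP R Υ l.1 ≤ 1 := by
  rw [tsum_class n T (wordP R Υ)]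
  have := sum_prefix_le R hΥ hsum n (class_finite n T).toFinset
    (fun w hw => ((class_finite n T).mem_toFinset.1 hw).1) n [] (by simp)
  simpa using this

/-- Pigeonhole over the at most `(M + 1) ^ |𝒳|` letter-count vectors: some type class met by `S`
carries a polynomial fraction of the probability of `S`. -/
lemma exists_heavy_type {R : List (X N r) → Fin N} {q : (j : Fin N) → Fin (r j) → ℝ}
    (hq : ∀ j i, 0 ≤ q j i) {S : Finset (List (X N r))} {M : ℕ}
    (hS : ∀ w ∈ S, w.length ≤ M) {B : ℝ} (hB : 0 < B) (hSB : B ≤ ∑ w ∈ S, wordP R q w) :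
    ∃ w ∈ S, B / ((M : ℝ) + 1) ^ Fintype.card (X N r) ≤
      ∑' l : {l : List (X N r) | l.length = w.length ∧ ∀ a, typeOf l a = typeOf w a},
        wordP R q l.1 := by
  have hpos : (0 : ℝ) < ((M : ℝ) + 1) ^ Fintype.card (X N r) := by positivity
  obtain ⟨c, -, hc⟩ := Finset.exists_le_sum_fiber_of_maps_to_of_nsmul_le_sum
    (s := S) (t := Fintype.piFinset fun _ : X N r => Finset.range (M + 1))
    (f := fun w a => w.count a) (w := wordP R q)
    (b := B / ((M : ℝ) + 1) ^ Fintype.card (X N r))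
    (fun w hw => by
      rw [Fintype.mem_piFinset]
      intro a
      rw [Finset.mem_range]
      have := hS w hw
      have := List.count_le_length (a := a) (l := w)
      omega)
    ⟨fun _ => 0, by simp⟩
    (by
      rw [Fintype.card_piFinset]
      simp only [Finset.card_range, Finset.prod_const, Finset.card_univ, nsmul_eq_mul]
      push_cast
      rw [mul_div_cancel₀ _ hpos.ne']
      exact hSB)
  have hne : (S.filter fun w => (fun a => w.count a) = c).Nonempty := by
    by_contra h
    rw [Finset.not_nonempty_iff_eq_empty] at h
    rw [h, Finset.sum_empty] at hc
    exact absurd hc (not_le.2 (div_pos hB hpos))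
  obtain ⟨w, hw⟩ := hne
  rw [Finset.mem_filter] at hw
  refine ⟨w, hw.1, hc.trans ?_⟩
  rw [tsum_class _ _ (wordP R q)]
  refine Finset.sum_le_sum_of_subset_of_nonneg ?_ fun l _ _ => wordP_nonneg R hq l
  intro l hl
  rw [Finset.mem_filter] at hl
  have hcount : ∀ a, l.count a = w.count a := fun a => congrFun (hl.2.trans hw.2.symm) a
  have hlen : l.length = w.length := by
    have h1 := sum_count l
    simp only [hcount, sum_count] at h1
    exact_mod_cast h1.symm
  rw [Set.Finite.mem_toFinset]
  exact ⟨hlen, fun a => by simp only [typeOf, hcount, hlen]⟩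

/-- Small deviations of a word with respect to `p`, with `p` close to `q`, make its type close to the
mixture of `q` with the group frequencies of the word. -/
lemma type_dev_le {p q : (j : Fin N) → Fin (r j) → ℝ} (hq : ∀ j i, 0 ≤ q j i)
    (hq1 : ∀ j, ∑ i, q j i = 1) {t : ℝ} (ht : 0 ≤ t)
    (hpq : ∀ j i, |p j i - q j i| ≤ t * q j i)
    {l : List (X N r)} (hl : 0 < l.length) {δ : ℝ}
    (hδ : ∀ a, |walk (dev p a) l| ≤ δ * l.length) :
    ∑ j : Fin N, ∑ i : Fin (r j), |typeOf l ⟨j, i⟩ - (∑ i', typeOf l ⟨j, i'⟩) * q j i|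
      ≤ (Fintype.card (X N r) : ℝ) * (δ + t) := by
  have hl' : (0 : ℝ) < l.length := by exact_mod_cast hl
  rw [← Fintype.sum_sigma (f := fun a : X N r =>
    |typeOf l a - (∑ i', typeOf l ⟨a.1, i'⟩) * q a.1 a.2|)]
  have hterm : ∀ a : X N r,
      |typeOf l a - (∑ i', typeOf l ⟨a.1, i'⟩) * q a.1 a.2| ≤ δ + t := by
    intro a
    have hlam : ∑ i', typeOf l (⟨a.1, i'⟩ : X N r)
        = (∑ i', (l.count (⟨a.1, i'⟩ : X N r) : ℝ)) / l.length := by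
      simp [typeOf, Finset.sum_div]
    have hlam0 : 0 ≤ ∑ i', typeOf l (⟨a.1, i'⟩ : X N r) :=
      Finset.sum_nonneg fun _ _ => by unfold typeOf; positivity
    have hlam1 : ∑ i', typeOf l (⟨a.1, i'⟩ : X N r) ≤ 1 := by
      rw [hlam, div_le_one hl', ← sum_count l, Fintype.sum_sigma]
      exact Finset.single_le_sum
        (f := fun j => ∑ i', (l.count (⟨j, i'⟩ : X N r) : ℝ))
        (fun _ _ => by positivity) (Finset.mem_univ a.1)
    have hqa : q a.1 a.2 ≤ 1 := by
      rw [← hq1 a.1]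
      exact Finset.single_le_sum (fun i _ => hq a.1 i) (Finset.mem_univ _)
    have hsplit : typeOf l a - (∑ i', typeOf l ⟨a.1, i'⟩) * q a.1 a.2
        = walk (dev p a) l / l.length
          + (∑ i', typeOf l ⟨a.1, i'⟩) * (p a.1 a.2 - q a.1 a.2) := by
      rw [walk_dev, hlam, typeOf]
      field_simp
      ring
    rw [hsplit]
    refine (abs_add_le _ _).trans (add_le_add ?_ ?_)
    · rw [abs_div, abs_of_pos hl', div_le_iff₀ hl']
      exact hδ a
    · rw [abs_mul, abs_of_nonneg hlam0]
      calc _ ≤ 1 * (t * q a.1 a.2) :=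
            mul_le_mul hlam1 (hpq _ _) (abs_nonneg _) zero_le_one
        _ ≤ t := by rw [one_mul]; exact mul_le_of_le_one_right ht hqa
  calc _ ≤ ∑ _a : X N r, (δ + t) := Finset.sum_le_sum fun a _ => hterm a
    _ = _ := by rw [Finset.sum_const, Finset.card_univ, nsmul_eq_mul]

/-- `(n, T)` satisfies all the requirements for `(k, R)` with error `e`: the exact constraints on
length, coverage and cost, class probability at least `exp (-e k)`, and distance at most `e` from
the mixture of the groups of `q`. -/
structure Adm (bb kb : (j : Fin N) → Fin (r j) → ℕ) (α : ℝ)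
    (q : (j : Fin N) → Fin (r j) → ℝ) (e : ℝ) (k : ℕ) (R : List (X N r) → Fin N)
    (n : ℕ) (T : X N r → ℝ) : Prop where
  pos : 1 ≤ n
  int : ∀ a, ∃ m : ℕ, (n : ℝ) * T a = (m : ℝ)
  sum : ∑ a, T a = 1
  cover : (k : ℝ) ≤ (n : ℝ) * ∑ a : X N r, (kb a.1 a.2 : ℝ) * T a
  cost : (n : ℝ) * (∑ a : X N r, (bb a.1 a.2 : ℝ) * T a) ≤ α * k
  len : (n : ℝ) ≤ α * k
  prob : Real.exp (-(e * k)) ≤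
    ∑' l : {l : List (X N r) | l.length = n ∧ ∀ a, typeOf l a = T a}, wordP R q l.1
  near : ∑ j : Fin N, ∑ i : Fin (r j), |T ⟨j, i⟩ - (∑ i', T ⟨j, i'⟩) * q j i| ≤ e

lemma Adm.mono {bb kb : (j : Fin N) → Fin (r j) → ℕ} {α : ℝ}
    {q : (j : Fin N) → Fin (r j) → ℝ} {e e' : ℝ} {k : ℕ} {R : List (X N r) → Fin N}
    {n : ℕ} {T : X N r → ℝ} (h : Adm bb kb α q e k R n T) (he : e ≤ e') :
    Adm bb kb α q e' k R n T where
  pos := h.pos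
  int := h.int
  sum := h.sum
  cover := h.cover
  cost := h.cost
  len := h.len
  prob := le_trans (Real.exp_le_exp.2
    (neg_le_neg (mul_le_mul_of_nonneg_right he (Nat.cast_nonneg k)))) h.prob
  near := h.near.trans he

lemma eventually_poly_exp (α : ℝ) (d : ℕ) {b c : ℝ} (hb : 0 < b) (hc : 0 < c) :
    ∀ᶠ k : ℕ in Filter.atTop, Real.exp (-(b * k)) * (|α| * k + 1) ^ d ≤ c := by
  have h1 := tendsto_pow_const_mul_const_pow_of_abs_lt_one d
    (r := Real.exp (-b)) (by rw [abs_of_pos (Real.exp_pos _)]; simpa using hb)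
  have h2 := h1.const_mul ((|α| + 1) ^ d)
  rw [mul_zero] at h2
  filter_upwards [h2.eventually_lt_const hc, Filter.eventually_ge_atTop 1] with k hk hk1
  refine le_trans ?_ hk.le
  have hk' : (1 : ℝ) ≤ k := by exact_mod_cast hk1
  have h3 : Real.exp (-(b * k)) = Real.exp (-b) ^ k := by
    rw [← Real.exp_nat_mul]; ring_nf
  rw [h3, ← mul_assoc, ← mul_pow, mul_comm]
  refine mul_le_mul_of_nonneg_right ?_ (by positivity)
  refine pow_le_pow_left₀ (by positivity) ?_ d
  nlinarith [abs_nonneg α]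

lemma eventually_small (d α η : ℝ) {c : ℝ} (hc : 0 < c) :
    ∀ᶠ k : ℕ in Filter.atTop, d * (α * k + 1) / (η * k) ^ 2 ≤ c := by
  have h1 : Filter.Tendsto (fun k : ℕ => (d * α / η ^ 2) * (1 / (k : ℝ))
      + (d / η ^ 2) * (1 / (k : ℝ)) * (1 / (k : ℝ))) Filter.atTop (nhds 0) := by
    have h0 := tendsto_one_div_atTop_nhds_zero_nat (𝕜 := ℝ)
    simpa using (h0.const_mul (d * α / η ^ 2)).add ((h0.const_mul (d / η ^ 2)).mul h0)
  filter_upwards [h1.eventually_lt_const hc, Filter.eventually_ge_atTop 1] with k hk hk1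
  have hk' : (k : ℝ) ≠ 0 := by
    have : k ≠ 0 := by omega
    exact_mod_cast this
  refine le_trans (le_of_eq ?_) hk.le
  by_cases hη : η = 0
  · simp [hη]
  · field_simp

/-- Every error level is eventually achieved, uniformly over the consistent rules mappings. -/
lemma eventually_adm {bb kb : (j : Fin N) → Fin (r j) → ℕ} (hbb : ∀ j i, 1 ≤ bb j i)
    {α : ℝ} (hα : 0 < α) {q : (j : Fin N) → Fin (r j) → ℝ} (hq : ∀ j i, 0 ≤ q j i)
    (hq1 : ∀ j, ∑ i, q j i = 1)
    (hqs : ∀ j, ∑ i, q j i * (bb j i : ℝ) ≤ α * ∑ i, q j i * (kb j i : ℝ))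
    {e : ℝ} (he : 0 < e) :
    ∀ᶠ k : ℕ in Filter.atTop, ∀ R : List (X N r) → Fin N, Consistent kb k R →
      ∃ n T, Adm bb kb α q e k R n T := by
  set d : ℝ := (Fintype.card (X N r) : ℝ) with hd
  have hd0 : 0 ≤ d := by positivity
  obtain ⟨κ, hκ⟩ : ∃ κ : ℕ, ∀ a : X N r, kb a.1 a.2 ≤ κ :=
    ⟨∑ a : X N r, kb a.1 a.2, fun a =>
      Finset.single_le_sum (f := fun a : X N r => kb a.1 a.2) (fun _ _ => Nat.zero_le _)
        (Finset.mem_univ a)⟩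
  -- `η` and `t` split the error `e`: `η κ + t ≤ e / (d + 1)` controls the distance to the mixture,
  -- as a word of coverage `k` has length at least `k / κ`, and `t α ≤ e / 2` controls the change of
  -- measure, as a good word has length at most `α k`.
  set η : ℝ := e / (2 * (d + 1) * (κ + 1)) with hηdef
  have hη : 0 < η := by positivity
  set t : ℝ := min (e / (2 * (d + 1))) (e / (2 * α)) with htdef
  have ht : 0 < t := lt_min (by positivity) (by positivity)
  have htα : t * α ≤ e / 2 := by
    calc t * α ≤ e / (2 * α) * α := mul_le_mul_of_nonneg_right (min_le_right _ _) hα.le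
      _ = e / 2 := by field_simp
  have hdt : d * (η * κ + t) ≤ e := by
    have h1 : η * κ ≤ e / (2 * (d + 1)) := by
      rw [hηdef, div_mul_eq_mul_div, div_le_div_iff₀ (by positivity) (by positivity)]
      have : 0 ≤ e * (2 * (d + 1)) := by positivity
      nlinarith
    calc d * (η * κ + t) ≤ (d + 1) * (e / (2 * (d + 1)) + e / (2 * (d + 1))) := by
          refine mul_le_mul (by linarith) (add_le_add h1 (min_le_left _ _))
            (by positivity) (by positivity)
      _ = e := by field_simp; ring
  have hs : ∀ j, ∑ i, q j i * drift α bb kb ⟨j, i⟩ ≤ 0 := by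
    intro j
    have h1 : ∀ i, q j i * drift α bb kb ⟨j, i⟩
        = q j i * (bb j i : ℝ) - α * (q j i * (kb j i : ℝ)) := by
      intro i; simp only [drift]; ring
    simp only [h1, Finset.sum_sub_distrib, ← Finset.mul_sum]
    linarith [hqs j]
  obtain ⟨p, hp, hp1, hpq, θ, ρ, hθ, hρ, hρ1, hdich⟩ := exists_tilts hq hq1 hs ht
  have hcpq : ∀ j i, Real.exp (-t) * p j i ≤ q j i := by
    intro j i
    have h1 : p j i ≤ q j i * Real.exp t := by
      have := (abs_le.1 (hpq j i)).2
      have h2 := mul_le_mul_of_nonneg_left (Real.add_one_le_exp t) (hq j i)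
      linarith
    calc Real.exp (-t) * p j i ≤ Real.exp (-t) * (q j i * Real.exp t) :=
          mul_le_mul_of_nonneg_left h1 (Real.exp_pos _).le
      _ = q j i := by rw [Real.exp_neg]; field_simp
  filter_upwards [eventually_poly_exp α (Fintype.card (X N r)) (half_pos he) (half_pos hρ),
    eventually_small d α η (half_pos hρ), Filter.eventually_ge_atTop 1] with k hk1 hk2 hk R hR
  have hαk : 0 ≤ α * k := by positivity
  have hmass := good_mass hp hp1 hα hbb hθ hρ.le hρ1 hdich hk hη hR
  set S := (good_finite p α kb hbb k η).toFinset with hSdef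
  have hSmem : ∀ w, w ∈ S ↔ w ∈ Good p α bb kb k η := fun w => by simp [hSdef]
  have hB : ρ / 2 * Real.exp (-(t * (α * k))) ≤ ∑ w ∈ S, wordP R q w := by
    calc ρ / 2 * Real.exp (-(t * (α * k)))
        ≤ (∑ w ∈ S, wordP R p w) * Real.exp (-(t * (α * k))) :=
          mul_le_mul_of_nonneg_right (by linarith) (Real.exp_pos _).le
      _ ≤ _ := by
          rw [Finset.sum_mul]
          refine Finset.sum_le_sum fun w hw => ?_
          refine le_trans ?_ (wordP_change R hp (Real.exp_pos _).le hcpq w)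
          rw [mul_comm]
          refine mul_le_mul_of_nonneg_right ?_ (wordP_nonneg R hp w)
          rw [← Real.exp_nat_mul]
          refine Real.exp_le_exp.2 ?_
          have := mul_le_mul_of_nonneg_left (good_length hbb ((hSmem w).1 hw)) ht.le
          linarith
  obtain ⟨w, hwS, hw⟩ := exists_heavy_type hq (S := S) (M := ⌊α * k⌋₊)
    (fun w hw => Nat.le_floor (good_length hbb ((hSmem w).1 hw))) (by positivity) hB
  have hg := (hSmem w).1 hwS
  have hwne : 0 < w.length := by
    rcases Nat.eq_zero_or_pos w.length with h0 | h0
    · have h1 := hg.1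
      rw [List.length_eq_zero_iff.1 h0] at h1
      simp [kap] at h1
      omega
    · exact h0
  have hw' : (w.length : ℝ) ≠ 0 := by exact_mod_cast hwne.ne'
  have hnT : ∀ a, (w.length : ℝ) * typeOf w a = (w.count a : ℝ) := by
    intro a
    rw [typeOf, mul_div_cancel₀ _ hw']
  have hnK : ∀ K : (j : Fin N) → Fin (r j) → ℕ,
      (w.length : ℝ) * ∑ a : X N r, (K a.1 a.2 : ℝ) * typeOf w a = (kap K w : ℝ) := by
    intro K
    rw [kap_eq_sum_count, Finset.mul_sum]
    refine Finset.sum_congr rfl fun a _ => ?_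
    rw [← hnT a]
    ring
  have hkκ : (k : ℝ) ≤ κ * w.length := by
    have h1 := kap_eq_sum_count kb w
    rw [hg.1] at h1
    rw [h1, ← sum_count w, Finset.mul_sum]
    refine Finset.sum_le_sum fun a _ => ?_
    exact mul_le_mul_of_nonneg_right (by exact_mod_cast hκ a) (Nat.cast_nonneg _)
  refine ⟨w.length, typeOf w, hwne, fun a => ⟨_, hnT a⟩, ?_, ?_, ?_, good_length hbb hg, ?_, ?_⟩
  · have : ∑ a, typeOf w a = (∑ a, (w.count a : ℝ)) / w.length := by
      rw [Finset.sum_div]; rfl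
    rw [this, sum_count, div_self hw']
  · rw [hnK, hg.1]
  · rw [hnK]
    have h1 : walk (drift α bb kb) w = (kap bb w : ℝ) - α * (kap kb w : ℝ) := by
      rw [walk_eq_sum_count, kap_eq_sum_count, kap_eq_sum_count, Finset.mul_sum,
        ← Finset.sum_sub_distrib]
      refine Finset.sum_congr rfl fun a _ => ?_
      unfold drift
      ring
    have h2 := hg.2.1
    rw [h1, hg.1] at h2
    linarith
  · refine le_trans ?_ hw
    rw [le_div_iff₀ (by positivity)]
    have hfl : ((⌊α * k⌋₊ : ℝ) + 1) ^ Fintype.card (X N r)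
        ≤ (|α| * k + 1) ^ Fintype.card (X N r) := by
      refine pow_le_pow_left₀ (by positivity) ?_ _
      rw [abs_of_pos hα]
      linarith [Nat.floor_le hαk]
    have hexp : Real.exp (-(e * k)) ≤ Real.exp (-(e / 2 * k)) * Real.exp (-(t * (α * k))) := by
      rw [← Real.exp_add]
      refine Real.exp_le_exp.2 ?_
      have := mul_le_mul_of_nonneg_right htα (Nat.cast_nonneg (α := ℝ) k)
      linarith
    calc _ ≤ Real.exp (-(e / 2 * k)) * Real.exp (-(t * (α * k)))
            * (|α| * k + 1) ^ Fintype.card (X N r) :=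
          mul_le_mul hexp hfl (by positivity) (by positivity)
      _ = (Real.exp (-(e / 2 * k)) * (|α| * k + 1) ^ Fintype.card (X N r))
            * Real.exp (-(t * (α * k))) := by ring
      _ ≤ _ := mul_le_mul_of_nonneg_right hk1 (Real.exp_pos _).le
  · refine (type_dev_le hq hq1 ht.le hpq hwne (δ := η * κ) fun a => ?_).trans hdt
    refine (hg.2.2 a).trans ?_
    rw [mul_assoc]
    exact mul_le_mul_of_nonneg_left hkκ hη.le

end Types

/-! ### Diagonal choice of the error -/

/-- A monotone property that eventually holds at each positive level eventually holds along some
sequence of levels tending to `0`. -/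
lemma exists_tendsto_of_eventually {P : ℝ → ℕ → Prop}
    (hmono : ∀ e e' k, e ≤ e' → P e k → P e' k)
    (h : ∀ e, 0 < e → ∀ᶠ k : ℕ in Filter.atTop, P e k) :
    ∃ f : ℕ → ℝ, (∀ k, 0 ≤ f k) ∧ Filter.Tendsto f Filter.atTop (nhds 0) ∧
      ∀ᶠ k in Filter.atTop, P (f k) k := by
  set g : ℕ → ℝ := fun k => sInf {e | 0 < e ∧ P e k} with hg
  have hbdd : ∀ k, BddBelow {e | 0 < e ∧ P e k} := fun k => ⟨0, fun e he => he.1.le⟩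
  have hg0 : ∀ k, 0 ≤ g k := fun k => Real.sInf_nonneg fun e he => he.1.le
  have hgt : Filter.Tendsto g Filter.atTop (nhds 0) := by
    rw [Metric.tendsto_atTop']
    intro ε hε
    obtain ⟨k0, hk0⟩ := Filter.eventually_atTop.1 (h (ε / 2) (half_pos hε))
    refine ⟨k0, fun k hk => ?_⟩
    rw [Real.dist_eq, sub_zero, abs_of_nonneg (hg0 k)]
    have : g k ≤ ε / 2 := csInf_le (hbdd k) ⟨half_pos hε, hk0 k (le_of_lt hk)⟩
    linarith
  refine ⟨fun k => g k + 1 / ((k : ℝ) + 1), fun k => add_nonneg (hg0 k) (by positivity), ?_, ?_⟩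
  · simpa using hgt.add (tendsto_one_div_add_atTop_nhds_zero_nat (𝕜 := ℝ))
  · filter_upwards [h 1 one_pos] with k hk
    have hpos : (0 : ℝ) < 1 / ((k : ℝ) + 1) := by positivity
    obtain ⟨e, he, hlt⟩ := exists_lt_of_csInf_lt (s := {e | 0 < e ∧ P e k})
      ⟨1, one_pos, hk⟩ (lt_add_of_pos_right (g k) hpos)
    exact hmono e _ k hlt.le he.2

end RB

/-- Lemma 9, `strong_generator`.  `q j` is the minimizer
attaining the `α`-branching number `M_j`, and `Q` is their concatenation.
There are `L > 0`, `C > 0` and, for every `k > L` and `k`-consistent rules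
mapping `R`, a length `n^{k,R} ≥ 1` and a type `T^{k,R}` satisfying (1)-(3). -/
theorem stmt_10
    (N : ℕ) (hN : 1 ≤ N) (r : Fin N → ℕ) (hr : ∀ j, 1 ≤ r j)
    (bb kb : (j : Fin N) → Fin (r j) → ℕ)
    (hbb : ∀ j i, 1 ≤ bb j i)
    (γ : (j : Fin N) → Fin (r j) → ℝ)
    (hγpos : ∀ j i, 0 < γ j i) (hγsum : ∀ j, ∑ i, γ j i = 1)
    (hks : ∃ j, ∀ i, kb j i ≤ 1)
    (α : ℝ) (hα : 0 < α)
    (hfeas : ∀ j, (RB.BrSet α (bb j) (kb j) (γ j)).Nonempty)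
    (q : (j : Fin N) → Fin (r j) → ℝ)
    (hq : ∀ j, (∀ i, 0 ≤ q j i) ∧ (∑ i, q j i = 1) ∧
      (∑ i, q j i * (bb j i : ℝ)) ≤ α * (∑ i, q j i * (kb j i : ℝ)) ∧
      RB.KL (q j) (γ j) / (∑ i, q j i * (kb j i : ℝ)) =
        sInf (RB.BrSet α (bb j) (kb j) (γ j))) :
    ∃ L : ℝ, 0 < L ∧ ∃ C : ℝ, 0 < C ∧
    ∃ n : ℕ → (List (RB.X N r) → Fin N) → ℕ,
    ∃ T : ℕ → (List (RB.X N r) → Fin N) → RB.X N r → ℝ,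
      -- `n^{k,R}` is a length and `T^{k,R}` is a type of length-`n^{k,R}` words
      (∀ k : ℕ, L < (k : ℝ) → ∀ R : List (RB.X N r) → Fin N, RB.Consistent kb k R →
        1 ≤ n k R ∧ (∀ a, ∃ m : ℕ, (n k R : ℝ) * T k R a = (m : ℝ)) ∧
        (∑ a, T k R a = 1)) ∧
      -- (1)
      Filter.Tendsto (fun k : ℕ =>
          sInf {x | ∃ R : List (RB.X N r) → Fin N, RB.Consistent kb k R ∧
            x = Real.log (∑' l : {l : List (RB.X N r) |
                  l.length = n k R ∧ ∀ a, RB.typeOf l a = T k R a},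
                RB.wordP R q l.1) / (k : ℝ)})
        Filter.atTop (nhds 0) ∧
      -- (2)
      Filter.Tendsto (fun k : ℕ =>
          sSup {x | ∃ R : List (RB.X N r) → Fin N, RB.Consistent kb k R ∧
            x = ∑ j : Fin N, ∑ i : Fin (r j),
              |T k R ⟨j, i⟩ - (∑ i', T k R ⟨j, i'⟩) * q j i|})
        Filter.atTop (nhds 0) ∧
      -- (3)
      (∀ k : ℕ, L < (k : ℝ) → ∀ R : List (RB.X N r) → Fin N, RB.Consistent kb k R →
        (k : ℝ) ≤ (n k R : ℝ) * ∑ a : RB.X N r, (kb a.1 a.2 : ℝ) * T k R a ∧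
        (n k R : ℝ) * (∑ a : RB.X N r, (bb a.1 a.2 : ℝ) * T k R a) ≤ α * k ∧
        (n k R : ℝ) ≤ C * k) := by
  have hq0 : ∀ j i, 0 ≤ q j i := fun j => (hq j).1
  have hq1 : ∀ j, ∑ i, q j i = 1 := fun j => (hq j).2.1
  obtain ⟨f, hf0, hft, hf⟩ := RB.exists_tendsto_of_eventually
    (P := fun e k => ∀ R : List (RB.X N r) → Fin N, RB.Consistent kb k R →
      ∃ nT : ℕ × (RB.X N r → ℝ), RB.Adm bb kb α q e k R nT.1 nT.2)
    (fun e e' k he h R hR => (h R hR).imp fun _ h' => h'.mono he)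
    (fun e he => (RB.eventually_adm hbb hα hq0 hq1 (fun j => (hq j).2.2.1) he).mono
      fun k h R hR => let ⟨n, T, h'⟩ := h R hR; ⟨(n, T), h'⟩)
  obtain ⟨k0, hk0⟩ := Filter.eventually_atTop.1 hf
  choose! F hF using hk0
  have hadm : ∀ k : ℕ, (k0 : ℝ) + 1 < k → ∀ R : List (RB.X N r) → Fin N,
      RB.Consistent kb k R → RB.Adm bb kb α q (f k) k R (F k R).1 (F k R).2 := by
    intro k hk R hR
    have h1 : (k0 : ℝ) ≤ k := by linarith
    exact hF k (by exact_mod_cast h1) R hR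
  have hlarge : ∀ᶠ k : ℕ in Filter.atTop, (k0 : ℝ) + 1 < k :=
    tendsto_natCast_atTop_atTop.eventually_gt_atTop _
  refine ⟨k0 + 1, by positivity, α, hα, fun k R => (F k R).1, fun k R => (F k R).2,
    fun k hk R hR => ?_, ?_, ?_, fun k hk R hR => ?_⟩
  · have h := hadm k hk R hR
    exact ⟨h.pos, h.int, h.sum⟩
  · have hft' : Filter.Tendsto (fun k => -f k) Filter.atTop (nhds 0) := by simpa using hft.neg
    refine tendsto_of_tendsto_of_tendsto_of_le_of_le' hft' tendsto_const_nhds ?_ ?_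
    · filter_upwards [hlarge] with k hk
      refine Real.le_sInf ?_ (neg_nonpos.2 (hf0 k))
      rintro x ⟨R, hR, rfl⟩
      have hkpos : (0 : ℝ) < k := lt_trans (by positivity) hk
      rw [le_div_iff₀ hkpos]
      have h := (hadm k hk R hR).prob
      have h2 := (Real.le_log_iff_exp_le ((Real.exp_pos _).trans_le h)).2 h
      linarith
    · filter_upwards [hlarge] with k hk
      refine Real.sInf_nonpos ?_
      rintro x ⟨R, hR, rfl⟩
      refine div_nonpos_of_nonpos_of_nonneg (Real.log_nonpos ?_ ?_) (Nat.cast_nonneg k)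
      · exact (Real.exp_pos _).le.trans (hadm k hk R hR).prob
      · exact RB.tsum_class_le_one R hq0 hq1 _ _
  · refine tendsto_of_tendsto_of_tendsto_of_le_of_le' tendsto_const_nhds hft ?_ ?_
    · refine Filter.Eventually.of_forall fun k => Real.sSup_nonneg ?_
      rintro x ⟨R, hR, rfl⟩
      positivity
    · filter_upwards [hlarge] with k hk
      refine Real.sSup_le ?_ (hf0 k)
      rintro x ⟨R, hR, rfl⟩
      exact (hadm k hk R hR).near
  · have h := hadm k hk R hR
    exact ⟨h.cover, h.cost, h.len⟩
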